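/- For every m ≥ 1, every x ∈ ℚ_p, and every i with 1 ≤ i ≤ l-1, the root-group element 𝐱_{α_i}(x) lies in H_m if and only if x ∈ p^{-m}ℤ_p. Here 𝐱_{α_i}(x) = I_{2l} + x·E_{i,i+1} - x·E_{2l-i,2l-i+1} for 1 ≤ i ≤ l-2, and 𝐱_{α_{l-1}}(x) = I_{2l} + x·E_{l-1,l+1} + ρ^{-1}x·E_{l+1,l+2} + (ρ^{-1}x²/2)·E_{l-1,l+2}. -/

import Mathlib

/-!
Conjugating by the torus element `e_m` multiplies the `(i,j)` entry by `p ^ (expo j - expo i)`.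
Every simple root is scaled by the same factor, `p ^ (2m)`, so `e_m⁻¹ 𝐱_α(x) e_m = 𝐱_α(p ^ (2m) x)`
(`conj_xroot`, `conj_xlast`). Since `𝐱_α(y)` always lies in the orthogonal group (`SO2l_xroot`,
`SO2l_xlast`), what remains is that `𝐱_α(y) ≡ I` modulo `p ^ m` exactly when `‖y‖ ≤ p ^ (-m)`.
For `α_{l-1}` this uses that `ρ` and `2` are units. With `y = p ^ (2m) x` the condition reads
`‖x‖ ≤ p ^ m`.

Orthogonality of `𝐱_α = 1 + N` amounts to `J N + (J N)ᵀ + Nᵀ J N = 0`, a computation with matrix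
units, because `J` sends each basis vector to a multiple of a basis vector.
-/

open Matrix BigOperators

noncomputable section

/-- Entry of a square matrix read with 0-indexed natural-number indices (`0` out of range). -/
def ent {F : Type*} [Field F] {N : ℕ} (g : Matrix (Fin N) (Fin N) F) (i j : ℕ) : F :=
  if h : i < N ∧ j < N then g ⟨i, h.1⟩ ⟨j, h.2⟩ else 0

/-- The antidiagonal matrix `J_n` (entry `(i,j)` is `1` iff `i+j = n+1` in 1-indexed terms). -/
def Jmat (F : Type*) [Field F] (n : ℕ) : Matrix (Fin n) (Fin n) F :=
  Matrix.of fun i j => if (i : ℕ) + (j : ℕ) + 1 = n then 1 else 0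

/-- `J_{2l,ρ} = diag(I_{l-1}, [[0,1],[-ρ,0]], I_{l-1}) · J_{2l}`. -/
def Jrho (F : Type*) [Field F] (l : ℕ) (ρ : F) : Matrix (Fin (2*l)) (Fin (2*l)) F :=
  (Matrix.of fun i j : Fin (2*l) =>
    if (i : ℕ) = l - 1 ∧ (j : ℕ) = l then 1
    else if (i : ℕ) = l ∧ (j : ℕ) = l - 1 then -ρ
    else if i = j ∧ ((i : ℕ) < l - 1 ∨ l + 1 ≤ (i : ℕ)) then 1
    else 0) * Jmat F (2*l)

/-- Membership in the quasi-split even special orthogonal group `SO_{2l}(J_{2l,ρ})`. -/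
def SO2l {F : Type*} [Field F] (l : ℕ) (ρ : F) (g : Matrix (Fin (2*l)) (Fin (2*l)) F) : Prop :=
  g.det = 1 ∧ gᵀ * Jrho F l ρ * g = Jrho F l ρ

/-- Membership in `U_{SO_{2l}}`: upper triangular, all diagonal entries `1`, and in `SO_{2l}`. -/
def USO2l {F : Type*} [Field F] (l : ℕ) (ρ : F) (g : Matrix (Fin (2*l)) (Fin (2*l)) F) : Prop :=
  SO2l l ρ g ∧ (∀ i j : Fin (2*l), (j : ℕ) < (i : ℕ) → g i j = 0) ∧ ∀ i, g i i = 1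

/-- Exponent of the diagonal entry of
`e_m = diag(p^{-2m(l-1)}, …, p^{-2m}, 1, 1, p^{2m}, …, p^{2m(l-1)})`. -/
def expo (l m i : ℕ) : ℤ :=
  if i < l - 1 then -((2 * m * (l - 1 - i) : ℕ) : ℤ)
  else if l + 1 ≤ i then ((2 * m * (i - l) : ℕ) : ℤ)
  else 0

/-- The diagonal matrix `e_m`. -/
def emat (p l m : ℕ) [Fact p.Prime] : Matrix (Fin (2*l)) (Fin (2*l)) ℚ_[p] :=
  Matrix.diagonal fun i => (p : ℚ_[p]) ^ (expo l m (i : ℕ))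

/-- The diagonal matrix `e_m⁻¹`. -/
def ematInv (p l m : ℕ) [Fact p.Prime] : Matrix (Fin (2*l)) (Fin (2*l)) ℚ_[p] :=
  Matrix.diagonal fun i => (p : ℚ_[p]) ^ (-(expo l m (i : ℕ)))

/-- Membership in `K_m = (I_{2l} + p^m·M_{2l}(ℤ_p)) ∩ SO_{2l}(J_{2l,ρ})`. -/
def Km (p l m : ℕ) [Fact p.Prime] (ρ : ℚ_[p])
    (g : Matrix (Fin (2*l)) (Fin (2*l)) ℚ_[p]) : Prop :=
  SO2l l ρ g ∧
    ∀ i j : Fin (2*l), ‖g i j - (if i = j then 1 else 0)‖ ≤ (p : ℝ) ^ (-(m : ℤ))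

/-- Membership in `H_m = e_m·K_m·e_m⁻¹`. -/
def Hm (p l m : ℕ) [Fact p.Prime] (ρ : ℚ_[p])
    (h : Matrix (Fin (2*l)) (Fin (2*l)) ℚ_[p]) : Prop :=
  Km p l m ρ (ematInv p l m * h * emat p l m)

/-- Membership in `U_m = U_{SO_{2l}} ∩ H_m`. -/
def Um (p l m : ℕ) [Fact p.Prime] (ρ : ℚ_[p])
    (u : Matrix (Fin (2*l)) (Fin (2*l)) ℚ_[p]) : Prop :=
  USO2l l ρ u ∧ Hm p l m ρ u

/-- `𝐱_{α_i}(x) = I_{2l} + x·E_{i,i+1} - x·E_{2l-i,2l-i+1}` (1-indexed positions),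
for `1 ≤ i ≤ l-2`. -/
def xroot {F : Type*} [Field F] (l i : ℕ) (x : F) : Matrix (Fin (2*l)) (Fin (2*l)) F :=
  Matrix.of fun a b =>
    if a = b then 1
    else if (a : ℕ) + 1 = i ∧ (b : ℕ) = i then x
    else if (a : ℕ) + 1 = 2*l - i ∧ (b : ℕ) = 2*l - i then -x
    else 0

/-- `𝐱_{α_{l-1}}(x) = I_{2l} + x·E_{l-1,l+1} + ρ⁻¹x·E_{l+1,l+2} + (ρ⁻¹x²/2)·E_{l-1,l+2}`
(1-indexed positions). -/
def xlast {F : Type*} [Field F] (l : ℕ) (ρ x : F) : Matrix (Fin (2*l)) (Fin (2*l)) F :=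
  Matrix.of fun a b =>
    if a = b then 1
    else if (a : ℕ) = l - 2 ∧ (b : ℕ) = l then x
    else if (a : ℕ) = l ∧ (b : ℕ) = l + 1 then ρ⁻¹ * x
    else if (a : ℕ) = l - 2 ∧ (b : ℕ) = l + 1 then ρ⁻¹ * x ^ 2 / 2
    else 0

/-! ### Root-group elements lie in the orthogonal group -/

section Generic

variable {F : Type*} [Field F] {l : ℕ}

/-- `J` is the Gram matrix of the split hyperbolic form plus the anisotropic plane `⟨1, -ρ⟩`, the
latter sitting in the positions `l - 1` and `l` (counted from `0`). -/
theorem Jrho_apply (hl : 2 ≤ l) (ρ : F) (i k : Fin (2*l)) :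
    Jrho F l ρ i k =
      if (i : ℕ) = l - 1 then (if (k : ℕ) = l - 1 then 1 else 0)
      else if (i : ℕ) = l then (if (k : ℕ) = l then -ρ else 0)
      else if (i : ℕ) + k + 1 = 2 * l then 1 else 0 := by
  have hi := i.2
  have hk := k.2
  unfold Jrho Jmat
  rw [Matrix.mul_apply, Finset.sum_eq_single k.rev]
  · simp only [Matrix.of_apply, Fin.val_rev, Fin.ext_iff]
    split_ifs <;> first | omega | simp
  · intro b _ hb
    have hb' : ¬ ((b : ℕ) + k + 1 = 2 * l) := by
      intro h
      apply hb
      ext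
      rw [Fin.val_rev]
      omega
    simp [hb']
  · simp

theorem Jrho_transpose (hl : 2 ≤ l) (ρ : F) : (Jrho F l ρ)ᵀ = Jrho F l ρ := by
  ext i k
  have hi := i.2
  have hk := k.2
  rw [Matrix.transpose_apply, Jrho_apply hl, Jrho_apply hl]
  split_ifs <;> first | omega | rfl

/-- Outside the anisotropic plane, `J` maps the basis vector `e_a` to its mirror image `e_{a'}`. -/
theorem Jrho_mul_single (hl : 2 ≤ l) (ρ x : F) (a a' b : Fin (2*l)) (h1 : (a : ℕ) ≠ l - 1)
    (h2 : (a : ℕ) ≠ l) (h : (a : ℕ) + a' + 1 = 2 * l) :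
    Jrho F l ρ * Matrix.single a b x = Matrix.single a' b x := by
  ext i j
  by_cases hj : j = b
  · subst hj
    rw [Matrix.mul_single_apply_same, Jrho_apply hl, Matrix.single_apply]
    simp only [Fin.ext_iff, and_true]
    split_ifs <;> first | omega | simp
  · rw [Matrix.mul_single_apply_of_ne _ _ _ _ _ hj, Matrix.single_apply]
    simp [Ne.symm hj]

/-- The basis vector `e_l` of the anisotropic plane is an eigenvector of `J`, with eigenvalue `-ρ`. -/
theorem Jrho_mul_single_mid (hl : 2 ≤ l) (ρ x : F) (a b : Fin (2*l)) (h : (a : ℕ) = l) :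
    Jrho F l ρ * Matrix.single a b x = Matrix.single a b (-ρ * x) := by
  ext i j
  by_cases hj : j = b
  · subst hj
    rw [Matrix.mul_single_apply_same, Jrho_apply hl, Matrix.single_apply]
    simp only [Fin.ext_iff, and_true]
    split_ifs <;> first | omega | simp
  · rw [Matrix.mul_single_apply_of_ne _ _ _ _ _ hj, Matrix.single_apply]
    simp [Ne.symm hj]

/-- The element `1 + N` preserves the form as soon as the terms of the expansion that involve `N`
cancel. As `J` is symmetric, they are all expressed through `M = J N`. -/
theorem form_one_add (hl : 2 ≤ l) (ρ : F) (N M : Matrix (Fin (2*l)) (Fin (2*l)) F)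
    (hM : Jrho F l ρ * N = M) (h : M + Mᵀ + Nᵀ * M = 0) :
    (1 + N)ᵀ * Jrho F l ρ * (1 + N) = Jrho F l ρ := by
  have h2 : Nᵀ * Jrho F l ρ = Mᵀ := by
    rw [← hM, Matrix.transpose_mul, Jrho_transpose hl]
  calc (1 + N)ᵀ * Jrho F l ρ * (1 + N)
      = Jrho F l ρ + (Jrho F l ρ * N + Nᵀ * Jrho F l ρ + Nᵀ * (Jrho F l ρ * N)) := by
        rw [Matrix.transpose_add, Matrix.transpose_one]
        noncomm_ring
    _ = Jrho F l ρ := by rw [h2, hM, h, add_zero]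

theorem xroot_eq (i : ℕ) (hi : 1 ≤ i) (hil : i ≤ l - 2) (x : F) (a b c d : Fin (2*l))
    (ha : (a : ℕ) = i - 1) (hb : (b : ℕ) = i) (hc : (c : ℕ) = 2 * l - i - 1)
    (hd : (d : ℕ) = 2 * l - i) :
    xroot l i x = 1 + (Matrix.single a b x + Matrix.single c d (-x)) := by
  ext s t
  simp only [xroot, Matrix.of_apply, Matrix.add_apply, Matrix.one_apply, Matrix.single_apply,
    Fin.ext_iff]
  split_ifs <;> first | omega | simp

theorem xlast_eq (hl : 2 ≤ l) (ρ x : F) (a b c : Fin (2*l))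
    (ha : (a : ℕ) = l - 2) (hb : (b : ℕ) = l) (hc : (c : ℕ) = l + 1) :
    xlast l ρ x = 1 + (Matrix.single a b x + Matrix.single b c (ρ⁻¹ * x)
      + Matrix.single a c (ρ⁻¹ * x ^ 2 / 2)) := by
  ext s t
  simp only [xlast, Matrix.of_apply, Matrix.add_apply, Matrix.one_apply, Matrix.single_apply,
    Fin.ext_iff]
  split_ifs <;> first | omega | simp

theorem SO2l_xroot (hl : 2 ≤ l) (ρ : F) (i : ℕ) (hi : 1 ≤ i) (hil : i ≤ l - 2) (x : F) :
    SO2l l ρ (xroot l i x) := by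
  constructor
  · rw [Matrix.det_of_isUpperTriangular]
    · simp [xroot]
    · intro s t hst
      have hst' : (t : ℕ) < s := hst
      simp only [xroot, Matrix.of_apply, Fin.ext_iff]
      split_ifs <;> first | omega | rfl
  · let a : Fin (2*l) := ⟨i - 1, by omega⟩
    let b : Fin (2*l) := ⟨i, by omega⟩
    let c : Fin (2*l) := ⟨2 * l - i - 1, by omega⟩
    let d : Fin (2*l) := ⟨2 * l - i, by omega⟩
    rw [xroot_eq i hi hil x a b c d rfl rfl rfl rfl]
    apply form_one_add hl ρ _ (Matrix.single d b x + Matrix.single b d (-x))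
    · rw [mul_add, Jrho_mul_single hl ρ x a d b, Jrho_mul_single hl ρ (-x) c b d] <;>
        simp only [a, b, c, d] <;> omega
    · have h1 : a ≠ d := by simp only [a, d, ne_eq, Fin.ext_iff]; omega
      have h2 : a ≠ b := by simp only [a, b, ne_eq, Fin.ext_iff]; omega
      have h3 : c ≠ d := by simp only [c, d, ne_eq, Fin.ext_iff]; omega
      have h4 : c ≠ b := by simp only [c, b, ne_eq, Fin.ext_iff]; omega
      simp only [Matrix.transpose_add, Matrix.transpose_single, add_mul, mul_add,
        Matrix.single_mul_single_of_ne _ _ _ _ h1, Matrix.single_mul_single_of_ne _ _ _ _ h2,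
        Matrix.single_mul_single_of_ne _ _ _ _ h3, Matrix.single_mul_single_of_ne _ _ _ _ h4]
      simp only [← Matrix.single_neg]
      abel

theorem SO2l_xlast (hl : 2 ≤ l) (ρ : F) (hρ : ρ ≠ 0) (h2 : (2 : F) ≠ 0) (x : F) :
    SO2l l ρ (xlast l ρ x) := by
  constructor
  · rw [Matrix.det_of_isUpperTriangular]
    · simp [xlast]
    · intro s t hst
      have hst' : (t : ℕ) < s := hst
      simp only [xlast, Matrix.of_apply, Fin.ext_iff]
      split_ifs <;> first | omega | rfl
  · let a : Fin (2*l) := ⟨l - 2, by omega⟩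
    let b : Fin (2*l) := ⟨l, by omega⟩
    let c : Fin (2*l) := ⟨l + 1, by omega⟩
    rw [xlast_eq hl ρ x a b c rfl rfl rfl]
    set y := ρ⁻¹ * x ^ 2 / 2 with hy
    have hx : -ρ * (ρ⁻¹ * x) = -x := by field_simp
    apply form_one_add hl ρ _
      (Matrix.single c b x + Matrix.single b c (-x) + Matrix.single c c y)
    · rw [mul_add, mul_add, Jrho_mul_single hl ρ x a c b, Jrho_mul_single hl ρ y a c c,
        Jrho_mul_single_mid hl ρ _ b c rfl, hx] <;>
        simp only [a, c] <;> omega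
    · have h1 : a ≠ c := by simp only [a, c, ne_eq, Fin.ext_iff]; omega
      have h3 : a ≠ b := by simp only [a, b, ne_eq, Fin.ext_iff]; omega
      have h4 : b ≠ c := by simp only [b, c, ne_eq, Fin.ext_iff]; omega
      have h5 : ρ⁻¹ * x * -x = -y + -y := by rw [hy]; field_simp; ring
      simp only [Matrix.transpose_add, Matrix.transpose_single, add_mul, mul_add,
        Matrix.single_mul_single_of_ne _ _ _ _ h1, Matrix.single_mul_single_of_ne _ _ _ _ h3,
        Matrix.single_mul_single_of_ne _ _ _ _ h4, Matrix.single_mul_single_same, h5,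
        Matrix.single_add]
      simp only [← Matrix.single_neg]
      abel

end Generic

/-! ### Conjugation by the torus element and congruence conditions -/

section Padic

variable {p : ℕ} [Fact p.Prime] {l m : ℕ}

theorem conj_apply (h : Matrix (Fin (2*l)) (Fin (2*l)) ℚ_[p]) (i j : Fin (2*l)) :
    (ematInv p l m * h * emat p l m) i j =
      (p : ℚ_[p]) ^ (expo l m j - expo l m i) * h i j := by
  have hp0 : (p : ℚ_[p]) ≠ 0 := by exact_mod_cast (Fact.out : p.Prime).ne_zero
  rw [emat, ematInv, Matrix.mul_diagonal, Matrix.diagonal_mul, sub_eq_neg_add, zpow_add₀ hp0]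
  ring

theorem expo_low {i : ℕ} (hl : 2 ≤ l) (hi : i ≤ l - 1) : expo l m i = -(2 * m * ((l : ℤ) - 1 - i)) := by
  unfold expo
  split_ifs with h1 h2
  · rw [Nat.sub_sub, Nat.cast_mul, Nat.cast_sub (by omega)]
    push_cast
    ring
  · omega
  · have : (i : ℤ) = l - 1 := by omega
    rw [this]
    ring

theorem expo_high {i : ℕ} (hi : l ≤ i) : expo l m i = 2 * m * ((i : ℤ) - l) := by
  unfold expo
  split_ifs with h1 h2
  · omega
  · rw [Nat.cast_mul, Nat.cast_sub (by omega)]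
    push_cast
    ring
  · have : i = l := by omega
    subst this
    ring

theorem conj_xroot (hl : 2 ≤ l) (i : ℕ) (hil : i ≤ l - 2) (x : ℚ_[p]) :
    ematInv p l m * xroot l i x * emat p l m = xroot l i ((p : ℚ_[p]) ^ (2 * m : ℤ) * x) := by
  ext s t
  rw [conj_apply]
  simp only [xroot, Matrix.of_apply]
  split_ifs with h1 h2 h3
  · simp [h1]
  · rw [expo_low hl (by omega : (t : ℕ) ≤ l - 1), expo_low hl (by omega : (s : ℕ) ≤ l - 1)]
    have h : (t : ℤ) = s + 1 := by omega
    rw [h]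
    congr 2
    ring
  · rw [expo_high (by omega : l ≤ (t : ℕ)), expo_high (by omega : l ≤ (s : ℕ))]
    have h : (t : ℤ) = s + 1 := by omega
    rw [h, mul_neg]
    congr 3
    ring
  · simp

/-- The entry in position `(l-1, l+2)` (counted from `1`) is scaled by `p ^ (4m)`, in accordance with
its being quadratic in `x`. -/
theorem conj_xlast (hl : 2 ≤ l) (ρ x : ℚ_[p]) :
    ematInv p l m * xlast l ρ x * emat p l m = xlast l ρ ((p : ℚ_[p]) ^ (2 * m : ℤ) * x) := by
  have hp0 : (p : ℚ_[p]) ≠ 0 := by exact_mod_cast (Fact.out : p.Prime).ne_zero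
  ext s t
  rw [conj_apply]
  simp only [xlast, Matrix.of_apply]
  split_ifs with h1 h2 h3 h4
  · simp [h1]
  · rw [expo_high (by omega : l ≤ (t : ℕ)), expo_low hl (by omega : (s : ℕ) ≤ l - 1)]
    have h : (t : ℤ) = l := by omega
    have h' : (s : ℤ) = l - 2 := by omega
    rw [h, h']
    congr 2
    ring
  · rw [expo_high (by omega : l ≤ (t : ℕ)), expo_high (by omega : l ≤ (s : ℕ))]
    have h : (t : ℤ) = l + 1 := by omega
    have h' : (s : ℤ) = l := by omega
    rw [h, h', mul_left_comm]
    congr 3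
    ring
  · rw [expo_high (by omega : l ≤ (t : ℕ)), expo_low hl (by omega : (s : ℕ) ≤ l - 1)]
    have h : (t : ℤ) = l + 1 := by omega
    have h' : (s : ℤ) = l - 2 := by omega
    have h'' : (2 * m * ((l : ℤ) + 1 - l) - -(2 * m * ((l : ℤ) - 1 - (l - 2)))) =
        2 * m + 2 * m := by ring
    rw [h, h', h'', zpow_add₀ hp0]
    ring
  · simp

/-- The factor `p ^ (2m)` turns the radius `p ^ m` into `p ^ (-m)`. -/
theorem norm_scale_le_iff (x : ℚ_[p]) :
    ‖(p : ℚ_[p]) ^ (2 * m : ℤ) * x‖ ≤ (p : ℝ) ^ (-(m : ℤ)) ↔ ‖x‖ ≤ (p : ℝ) ^ (m : ℤ) := by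
  have hp : (0 : ℝ) < p := by exact_mod_cast (Fact.out : p.Prime).pos
  have h : (p : ℝ) ^ (-(m : ℤ)) = (p : ℝ) ^ (-(2 * m : ℤ)) * (p : ℝ) ^ (m : ℤ) := by
    rw [← zpow_add₀ hp.ne']
    congr 1
    ring
  rw [norm_mul, Padic.norm_p_zpow, h]
  exact mul_le_mul_iff_right₀ (zpow_pos hp _)

theorem Km_xroot (hl : 2 ≤ l) (ρ : ℚ_[p]) (i : ℕ) (hi : 1 ≤ i) (hil : i ≤ l - 2) (y : ℚ_[p]) :
    Km p l m ρ (xroot l i y) ↔ ‖y‖ ≤ (p : ℝ) ^ (-(m : ℤ)) := by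
  have hp : (0 : ℝ) < p := by exact_mod_cast (Fact.out : p.Prime).pos
  constructor
  · rintro ⟨-, h⟩
    have := h ⟨i - 1, by omega⟩ ⟨i, by omega⟩
    simpa [xroot, show i - 1 ≠ i by omega, show i - 1 + 1 = i by omega] using this
  · intro h
    refine ⟨SO2l_xroot hl ρ i hi hil y, fun s t => ?_⟩
    simp only [xroot, Matrix.of_apply]
    split_ifs
    · simp
    · rw [sub_zero]; exact h
    · rw [sub_zero, norm_neg]; exact h
    · simp

theorem Km_xlast (hp2 : p ≠ 2) (hl : 2 ≤ l) (ρ : ℚ_[p]) (hρ : ‖ρ‖ = 1) (y : ℚ_[p]) :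
    Km p l m ρ (xlast l ρ y) ↔ ‖y‖ ≤ (p : ℝ) ^ (-(m : ℤ)) := by
  have hp : (1 : ℝ) < p := by exact_mod_cast (Fact.out : p.Prime).one_lt
  have hp0 : (0 : ℝ) < p := by linarith
  constructor
  · rintro ⟨-, h⟩
    have := h ⟨l - 2, by omega⟩ ⟨l, by omega⟩
    simpa [xlast, show l - 2 ≠ l by omega] using this
  · intro h
    have hρ0 : ρ ≠ 0 := by
      rintro rfl
      simp at hρ
    have h2 : ‖(2 : ℚ_[p])‖ = 1 := by
      have := (Padic.norm_natCast_eq_one_iff (p := p) (n := 2)).2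
        ((Nat.coprime_primes Fact.out Nat.prime_two).2 hp2)
      simpa using this
    refine ⟨SO2l_xlast hl ρ hρ0 two_ne_zero y, fun s t => ?_⟩
    have hle : (p : ℝ) ^ (-(m : ℤ)) ≤ 1 := zpow_le_one_of_nonpos₀ hp.le (by omega)
    -- the quadratic entry is even smaller, because `‖y‖ ≤ 1`
    have hsq : ‖y‖ ^ 2 ≤ (p : ℝ) ^ (-(m : ℤ)) := by
      nlinarith [norm_nonneg y]
    simp only [xlast, Matrix.of_apply]
    split_ifs
    · simp
    · rw [sub_zero]; exact h
    · rw [sub_zero, norm_mul, norm_inv, hρ, inv_one, one_mul]; exact h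
    · rw [sub_zero, norm_div, norm_mul, norm_inv, norm_pow, hρ, h2, inv_one, one_mul, div_one]
      exact hsq
    · simp

end Padic

/-- for `1 ≤ i ≤ l-1`, the root-group element `𝐱_{α_i}(x)` lies in `H_m` if and
only if `x ∈ p^{-m}ℤ_p`, i.e. `‖x‖ ≤ p^m`. -/
theorem statement8 (p : ℕ) [Fact p.Prime] (hp : p ≠ 2) (l : ℕ) (hl : 2 ≤ l)
    (ρ : ℚ_[p]) (hρ1 : ‖ρ‖ = 1) (hρ : ∀ x : ℚ_[p], x * x ≠ ρ)
    (m : ℕ) (hm : 1 ≤ m) :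
    (∀ i : ℕ, 1 ≤ i → i ≤ l - 2 → ∀ x : ℚ_[p],
      Hm p l m ρ (xroot l i x) ↔ ‖x‖ ≤ (p : ℝ) ^ (m : ℤ)) ∧
    (∀ x : ℚ_[p], Hm p l m ρ (xlast l ρ x) ↔ ‖x‖ ≤ (p : ℝ) ^ (m : ℤ)) := by
  constructor
  · intro i hi hil x
    rw [Hm, conj_xroot hl i hil, Km_xroot hl ρ i hi hil, norm_scale_le_iff]
  · intro x
    rw [Hm, conj_xlast hl, Km_xlast hp hl ρ hρ1, norm_scale_le_iff]
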